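/- If a ∈ k^× and a ≠ 1, then the Verma module M_{a,c} is a simple D-module for every c ∈ k. -/

import Mathlib

open FreeAlgebra

/-- Generators of the double of the Jordan plane. -/
inductive JGen : Type
  | u | v | zeta | g | ginv | x | y

variable (k : Type) [Field k] [IsAlgClosed k] [CharZero k]

/-- The defining relations of the double of the Jordan plane. -/
inductive JRel : FreeAlgebra k JGen → FreeAlgebra k JGen → Prop
  | gginv : JRel (ι k .g * ι k .ginv) 1
  | ginvg : JRel (ι k .ginv * ι k .g) 1
  | zg : JRel (ι k .zeta * ι k .g) (ι k .g * ι k .zeta)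
  | gx : JRel (ι k .g * ι k .x) (ι k .x * ι k .g)
  | gy : JRel (ι k .g * ι k .y) (ι k .y * ι k .g + ι k .x * ι k .g)
  | zy : JRel (ι k .zeta * ι k .y) (ι k .y * ι k .zeta + ι k .y)
  | zx : JRel (ι k .zeta * ι k .x) (ι k .x * ι k .zeta + ι k .x)
  | ug : JRel (ι k .u * ι k .g) (ι k .g * ι k .u)
  | vg : JRel (ι k .v * ι k .g) (ι k .g * ι k .v + ι k .g * ι k .u)
  | vz : JRel (ι k .v * ι k .zeta) (ι k .zeta * ι k .v + ι k .v)
  | uz : JRel (ι k .u * ι k .zeta) (ι k .zeta * ι k .u + ι k .u)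
  | yx : JRel (ι k .y * ι k .x) (ι k .x * ι k .y - (1/2 : k) • (ι k .x * ι k .x))
  | vu : JRel (ι k .v * ι k .u) (ι k .u * ι k .v - (1/2 : k) • (ι k .u * ι k .u))
  | ux : JRel (ι k .u * ι k .x) (ι k .x * ι k .u)
  | vx : JRel (ι k .v * ι k .x) (ι k .x * ι k .v + (1 - ι k .g) + ι k .x * ι k .u)
  | uy : JRel (ι k .u * ι k .y) (ι k .y * ι k .u + (1 - ι k .g))
  | vy : JRel (ι k .v * ι k .y) (ι k .y * ι k .v - ι k .g * ι k .zeta + ι k .y * ι k .u)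

/-- The double of the Jordan plane, as the presented algebra. -/
def D : Type := RingQuot (JRel k)

noncomputable instance : Ring (D k) := inferInstanceAs (Ring (RingQuot (JRel k)))
noncomputable instance : Algebra k (D k) := inferInstanceAs (Algebra k (RingQuot (JRel k)))

/-- The canonical projection from the free algebra onto `D`. -/
noncomputable def Dmk : FreeAlgebra k JGen →ₐ[k] D k := RingQuot.mkAlgHom k (JRel k)

noncomputable def DU : D k := Dmk k (ι k .u)
noncomputable def DV : D k := Dmk k (ι k .v)
noncomputable def DZ : D k := Dmk k (ι k .zeta)
noncomputable def DG : D k := Dmk k (ι k .g)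
noncomputable def DGinv : D k := Dmk k (ι k .ginv)
noncomputable def DX : D k := Dmk k (ι k .x)
noncomputable def DY : D k := Dmk k (ι k .y)

set_option synthInstance.maxHeartbeats 1000000
set_option maxHeartbeats 2000000

/-- The left ideal of `D` generated by `g - a`, `ζ + c/2`, `u`, `v`. -/
noncomputable def MIdeal (a c : k) : Submodule (D k) (D k) :=
  Submodule.span (D k)
    {DG k - algebraMap k (D k) a, DZ k + algebraMap k (D k) (c / 2), DU k, DV k}

/-- The Verma module `M_{a,c} = D ⊗_{D^{≥0}} T_{a,c}`, realized as the quotient of `D` by the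
left ideal generated by `g - a`, `ζ + c/2`, `u`, `v` (the annihilator in `D^{≥0}` of the
generator `z_{a,c}` of `T_{a,c}`, on which `g` acts by `a`, `ζ` by `-c/2`, and `u`, `v` by `0`).
The class of `1` corresponds to `1 ⊗ z_{a,c}`. -/
noncomputable abbrev Mver (a c : k) : Type := (D k) ⧸ (MIdeal k a c)

/-- The class of `d ∈ D` in `M_{a,c}`. -/
noncomputable def mmk (a c : k) : D k → Mver k a c := Submodule.Quotient.mk

set_option linter.unusedSectionVars false

section JRelations

lemma Dmk_rel {p q : FreeAlgebra k JGen} (h : JRel k p q) : Dmk k p = Dmk k q :=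
  RingQuot.mkAlgHom_rel k h

lemma D_gginv : DG k * DGinv k = 1 := by
  simpa [DG, DGinv] using Dmk_rel k JRel.gginv
lemma D_ginvg : DGinv k * DG k = 1 := by
  simpa [DG, DGinv] using Dmk_rel k JRel.ginvg
lemma D_gx : DG k * DX k = DX k * DG k := by
  simpa [DG, DX] using Dmk_rel k JRel.gx
lemma D_gy : DG k * DY k = DY k * DG k + DX k * DG k := by
  simpa [DG, DX, DY] using Dmk_rel k JRel.gy
lemma D_zy : DZ k * DY k = DY k * DZ k + DY k := by
  simpa [DZ, DY] using Dmk_rel k JRel.zy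
lemma D_zx : DZ k * DX k = DX k * DZ k + DX k := by
  simpa [DZ, DX] using Dmk_rel k JRel.zx
lemma D_yx : DY k * DX k = DX k * DY k - (1/2 : k) • (DX k * DX k) := by
  simpa [DY, DX] using Dmk_rel k JRel.yx
lemma D_ux : DU k * DX k = DX k * DU k := by
  simpa [DU, DX] using Dmk_rel k JRel.ux
lemma D_vx : DV k * DX k = DX k * DV k + (1 - DG k) + DX k * DU k := by
  simpa [DU, DV, DG, DX] using Dmk_rel k JRel.vx
lemma D_uy : DU k * DY k = DY k * DU k + (1 - DG k) := by
  simpa [DU, DY, DG, DX] using Dmk_rel k JRel.uy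
lemma D_vy : DV k * DY k = DY k * DV k - DG k * DZ k + DY k * DU k := by
  simpa [DU, DV, DG, DY, DZ] using Dmk_rel k JRel.vy
lemma D_ginvx : DGinv k * DX k = DX k * DGinv k := by
  calc DGinv k * DX k = DGinv k * DX k * (DG k * DGinv k) := by rw [D_gginv, mul_one]
    _ = DGinv k * (DX k * DG k) * DGinv k := by simp only [mul_assoc]
    _ = (DGinv k * DG k) * DX k * DGinv k := by rw [← D_gx]; simp only [mul_assoc]
    _ = _ := by rw [D_ginvg, one_mul]
lemma D_ginvy : DGinv k * DY k = DY k * DGinv k - DX k * DGinv k := by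
  have h : DGinv k * (DG k * DY k) * DGinv k
      = DGinv k * (DY k * DG k + DX k * DG k) * DGinv k := by rw [D_gy]
  have e1 : DGinv k * (DG k * DY k) * DGinv k = (DGinv k * DG k) * DY k * DGinv k := by
    simp only [mul_assoc]
  have e2 : DGinv k * (DY k * DG k + DX k * DG k) * DGinv k
      = DGinv k * DY k * (DG k * DGinv k) + DGinv k * DX k * (DG k * DGinv k) := by
    simp only [mul_assoc, mul_add, add_mul]
  rw [e1, e2, D_ginvg, D_gginv, one_mul, mul_one, mul_one, D_ginvx] at h
  rw [h]; abel

lemma D_comm_aeval (T C : D k) (h : T * DX k = DX k * T + C) (hC : C * DX k = DX k * C)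
    (p : Polynomial k) :
    T * Polynomial.aeval (DX k) p
      = Polynomial.aeval (DX k) p * T + Polynomial.aeval (DX k) (Polynomial.derivative p) * C := by
  have hpow : ∀ n : ℕ, C * DX k ^ n = DX k ^ n * C := fun n =>
    ((show Commute C (DX k) from hC).pow_right n).eq
  have key : ∀ n : ℕ, T * DX k ^ n = DX k ^ n * T + (n : D k) * (DX k ^ (n - 1) * C) := by
    intro n
    induction n with
    | zero => simp
    | succ n ih =>
      have e : (n : D k) * (DX k ^ (n - 1) * C) * DX k = (n : D k) * (DX k ^ n * C) := by
        rcases n with _ | n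
        · simp
        · rw [mul_assoc, mul_assoc, hC, ← mul_assoc (DX k ^ _), Nat.add_sub_cancel, ← pow_succ]
      rw [pow_succ, ← mul_assoc, ih, add_mul, e, mul_assoc, h, Nat.add_sub_cancel]
      push_cast
      noncomm_ring
  induction p using Polynomial.induction_on' with
  | add p q hp hq =>
    simp only [map_add, mul_add, add_mul, hp, hq]; abel
  | monomial n b =>
    rw [Polynomial.derivative_monomial, Polynomial.aeval_monomial, Polynomial.aeval_monomial,
      ← mul_assoc, ← Algebra.commutes, mul_assoc, key, map_mul, map_natCast]
    noncomm_ring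

end JRelations

section JAbs

variable {k}
variable {M : Type} [AddCommGroup M] [Module k M] [Module (D k) M] [IsScalarTower k (D k) M]

/-- Filtration by degree in `y`. -/
noncomputable def JF (z : M) : ℕ → Submodule k M
  | 0 => ⊥
  | n + 1 => JF z n ⊔ LinearMap.range
      ((LinearMap.toSpanSingleton (D k) M (DY k ^ n • z)).restrictScalars k ∘ₗ
        (Polynomial.aeval (R := k) (DX k)).toLinearMap)

lemma JF_succ (z m : M) (n : ℕ) : m ∈ JF (k := k) z (n + 1) ↔
    ∃ r ∈ JF (k := k) z n, ∃ p : Polynomial k,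
      m = r + Polynomial.aeval (DX k) p • DY k ^ n • z := by
  simp only [JF, Submodule.mem_sup, LinearMap.mem_range]
  constructor
  · rintro ⟨r, hr, _, ⟨p, rfl⟩, rfl⟩
    exact ⟨r, hr, p, rfl⟩
  · rintro ⟨r, hr, p, rfl⟩
    exact ⟨r, hr, _, ⟨p, rfl⟩, rfl⟩

lemma JF_le_succ {z m : M} {n : ℕ} (h : m ∈ JF (k := k) z n) : m ∈ JF (k := k) z (n + 1) :=
  (JF_succ z m n).2 ⟨m, h, 0, by simp⟩

lemma JF_mono {z m : M} {n n' : ℕ} (hn : n ≤ n') (h : m ∈ JF (k := k) z n) :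
    m ∈ JF (k := k) z n' := by
  induction hn with
  | refl => exact h
  | step _ ih => exact JF_le_succ ih

lemma JF_py (z : M) (n : ℕ) (p : Polynomial k) :
    Polynomial.aeval (DX k) p • DY k ^ n • z ∈ JF (k := k) z (n + 1) :=
  (JF_succ z _ n).2 ⟨0, zero_mem _, p, by simp⟩

lemma JF_y (z : M) (n : ℕ) : DY k ^ n • z ∈ JF (k := k) z (n + 1) := by
  simpa using JF_py (k := k) z n 1

lemma JF_p {z m : M} {n : ℕ} (q : Polynomial k) (h : m ∈ JF (k := k) z n) :
    Polynomial.aeval (DX k) q • m ∈ JF (k := k) z n := by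
  induction n generalizing m with
  | zero => simp only [JF, Submodule.mem_bot] at h ⊢; simp [h]
  | succ n ih =>
    obtain ⟨r, hr, p, rfl⟩ := (JF_succ _ _ _).1 h
    rw [smul_add, ← mul_smul, ← map_mul]
    exact add_mem (JF_le_succ (ih hr)) (JF_py _ _ _)

lemma JF_x {z m : M} {n : ℕ} (h : m ∈ JF (k := k) z n) : DX k • m ∈ JF (k := k) z n := by
  simpa using JF_p (Polynomial.X) h

lemma comm_smul (T C : D k) (h : T * DX k = DX k * T + C) (hC : C * DX k = DX k * C)
    (p : Polynomial k) (m : M) : T • Polynomial.aeval (DX k) p • m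
      = Polynomial.aeval (DX k) p • T • m
        + Polynomial.aeval (DX k) (Polynomial.derivative p) • C • m := by
  rw [← mul_smul, D_comm_aeval k T C h hC, add_smul, mul_smul, mul_smul]

lemma JF_Y {z m : M} {n : ℕ} (h : m ∈ JF (k := k) z n) : DY k • m ∈ JF (k := k) z (n + 1) := by
  induction n generalizing m with
  | zero => simp only [JF, Submodule.mem_bot] at h; simp [h]
  | succ n ih =>
    obtain ⟨r, hr, p, rfl⟩ := (JF_succ _ _ _).1 h
    rw [smul_add, comm_smul (DY k) (-((1/2 : k) • (DX k * DX k)))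
      (by rw [D_yx, sub_eq_add_neg]) (by simp [mul_assoc]), ← mul_smul (DY k), ← pow_succ',
      neg_smul, smul_assoc, mul_smul]
    refine add_mem (JF_le_succ (ih hr)) (add_mem (JF_py _ _ _) (JF_p _ (neg_mem ?_)))
    exact Submodule.smul_mem _ _ (JF_x (JF_x (JF_le_succ (JF_y _ _))))

/-- Stability of the filtration under `T` from a check on `y ^ n z`. -/
lemma JF_stab {z m : M} {n : ℕ} (T C : D k) (h : T * DX k = DX k * T + C)
    (hC : C * DX k = DX k * C)
    (hT : ∀ n, T • DY k ^ n • z ∈ JF (k := k) z (n + 1))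
    (hC' : ∀ n, C • DY k ^ n • z ∈ JF (k := k) z (n + 1))
    (hm : m ∈ JF (k := k) z n) : T • m ∈ JF (k := k) z n := by
  induction n generalizing m with
  | zero => simp only [JF, Submodule.mem_bot] at hm ⊢; simp [hm]
  | succ n ih =>
    obtain ⟨r, hr, p, rfl⟩ := (JF_succ _ _ _).1 hm
    rw [smul_add, comm_smul T C h hC]
    exact add_mem (JF_le_succ (ih hr)) (add_mem (JF_p _ (hT n)) (JF_p _ (hC' n)))

variable {z : M} {a c : k}

lemma JF_gy (hg : DG k • z = a • z) (n : ℕ) :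
    DG k • DY k ^ n • z - a • DY k ^ n • z ∈ JF (k := k) z n := by
  have : SMulCommClass k (D k) M := IsScalarTower.to_smulCommClass
  induction n with
  | zero => simp [hg]
  | succ n ih =>
    have e : DG k • DY k ^ (n + 1) • z - a • DY k ^ (n + 1) • z
        = DY k • (DG k • DY k ^ n • z - a • DY k ^ n • z)
          + DX k • (DG k • DY k ^ n • z - a • DY k ^ n • z) + a • DX k • DY k ^ n • z := by
      rw [pow_succ', mul_smul, ← mul_smul (DG k), D_gy, add_smul, mul_smul, mul_smul,
        smul_sub, smul_sub, smul_comm (DY k) a, smul_comm (DX k) a]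
      abel
    rw [e]
    exact add_mem (add_mem (JF_Y ih) (JF_le_succ (JF_x ih)))
      (Submodule.smul_mem _ _ (JF_x (JF_y _ _)))

lemma JF_gy' (hg : DG k • z = a • z) (n : ℕ) :
    DG k • DY k ^ n • z ∈ JF (k := k) z (n + 1) := by
  have := add_mem (JF_le_succ (JF_gy hg n)) (Submodule.smul_mem _ a (JF_y z n))
  simpa using this

lemma JF_G (hg : DG k • z = a • z) {m : M} {n : ℕ} (h : m ∈ JF (k := k) z n) :
    DG k • m ∈ JF (k := k) z n :=
  JF_stab (DG k) 0 (by rw [D_gx, add_zero]) (by simp) (JF_gy' hg) (by simp) h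

lemma JF_Ginv (hg : DG k • z = a • z) (ha : a ≠ 0) {m : M} {n : ℕ} (h : m ∈ JF (k := k) z n) :
    DGinv k • m ∈ JF (k := k) z n := by
  have : SMulCommClass k (D k) M := IsScalarTower.to_smulCommClass
  refine JF_stab (DGinv k) 0 (by rw [D_ginvx, add_zero]) (by simp) ?_ (by simp) h
  intro n
  induction n with
  | zero =>
    have : DGinv k • z = a⁻¹ • z := by
      have h2 : DGinv k • DG k • z = z := by rw [← mul_smul, D_ginvg, one_smul]
      rw [hg, smul_comm] at h2
      calc DGinv k • z = (a⁻¹ * a) • DGinv k • z := by rw [inv_mul_cancel₀ ha, one_smul]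
        _ = a⁻¹ • z := by rw [mul_smul, h2]
    rw [pow_zero, one_smul, this]
    exact Submodule.smul_mem _ _ (by simpa using JF_y (k := k) z 0)
  | succ n ih =>
    rw [pow_succ', mul_smul, ← mul_smul (DGinv k), D_ginvy, sub_smul, mul_smul, mul_smul]
    exact sub_mem (JF_Y ih) (JF_le_succ (JF_x ih))

lemma JF_Z (hz : DZ k • z = (-(c/2)) • z) {m : M} {n : ℕ} (h : m ∈ JF (k := k) z n) :
    DZ k • m ∈ JF (k := k) z n := by
  refine JF_stab (DZ k) (DX k) (D_zx k) rfl ?_ (fun n => JF_x (JF_y _ _)) h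
  intro n
  induction n with
  | zero =>
    rw [pow_zero, one_smul, hz]
    exact Submodule.smul_mem _ _ (by simpa using JF_y (k := k) z 0)
  | succ n ih =>
    rw [pow_succ', mul_smul, ← mul_smul (DZ k), D_zy, add_smul, mul_smul]
    exact add_mem (JF_Y ih) (JF_Y (JF_y _ _))

lemma JF_uy (hg : DG k • z = a • z) (hu : DU k • z = 0) (n : ℕ) :
    DU k • DY k ^ (n + 1) • z - (((n : k) + 1) * (1 - a)) • DY k ^ n • z ∈ JF (k := k) z n := by
  have : SMulCommClass k (D k) M := IsScalarTower.to_smulCommClass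
  induction n with
  | zero =>
    have : DU k • DY k • z = (1 - a) • z := by
      rw [← mul_smul, D_uy, add_smul, mul_smul, hu, sub_smul, sub_smul, hg]; simp
    simp [this]
  | succ n ih =>
    have e : DU k • DY k ^ (n + 1 + 1) • z
          - ((((n + 1 : ℕ) : k) + 1) * (1 - a)) • DY k ^ (n + 1) • z
        = DY k • (DU k • DY k ^ (n + 1) • z - (((n : k) + 1) * (1 - a)) • DY k ^ n • z)
          - (DG k • DY k ^ (n + 1) • z - a • DY k ^ (n + 1) • z) := by
      rw [pow_succ' _ (n + 1), mul_smul (DY k), ← mul_smul (DU k) (DY k), D_uy, add_smul,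
        mul_smul, smul_sub, smul_comm (DY k) (((n : k) + 1) * (1 - a)), ← mul_smul (DY k) (DY k ^ n),
        ← pow_succ', sub_smul, one_smul]
      generalize DG k • DY k ^ (n + 1) • z = A
      generalize DY k • DU k • DY k ^ (n + 1) • z = B
      generalize DY k ^ (n + 1) • z = E
      have hs : ((((n + 1 : ℕ) : k) + 1) * (1 - a)) • E
          = (((n : k) + 1) * (1 - a)) • E + (E - a • E) := by
        push_cast
        rw [← one_smul k E, smul_smul, smul_smul, smul_smul, ← sub_smul, ← add_smul]
        congr 1
        ring
      rw [hs]
      abel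
    rw [e]
    exact sub_mem (JF_Y ih) (JF_gy hg _)

lemma JF_uy' (hg : DG k • z = a • z) (hu : DU k • z = 0) (n : ℕ) :
    DU k • DY k ^ n • z ∈ JF (k := k) z n := by
  rcases n with _ | n
  · simp [hu]
  · have := add_mem (JF_le_succ (JF_uy hg hu n))
      (Submodule.smul_mem _ (((n : k) + 1) * (1 - a)) (JF_y z n))
    simpa using this

lemma U_p (p : Polynomial k) (m : M) : DU k • Polynomial.aeval (DX k) p • m
      = Polynomial.aeval (DX k) p • DU k • m := by
  rw [comm_smul (DU k) 0 (by rw [D_ux, add_zero]) (by simp)]; simp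

lemma JF_U (hg : DG k • z = a • z) (hu : DU k • z = 0) {m : M} {n : ℕ}
    (h : m ∈ JF (k := k) z (n + 1)) : DU k • m ∈ JF (k := k) z n := by
  induction n generalizing m with
  | zero =>
    obtain ⟨r, hr, p, rfl⟩ := (JF_succ _ _ _).1 h
    simp only [JF, Submodule.mem_bot] at hr
    rw [hr, zero_add, U_p]
    exact JF_p _ (JF_uy' hg hu _)
  | succ n ih =>
    obtain ⟨r, hr, p, rfl⟩ := (JF_succ _ _ _).1 h
    rw [smul_add, U_p]
    exact add_mem (JF_le_succ (ih hr)) (JF_p _ (JF_uy' hg hu _))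

lemma V_p (p : Polynomial k) (m : M) : DV k • Polynomial.aeval (DX k) p • m
      = Polynomial.aeval (DX k) p • DV k • m
        + Polynomial.aeval (DX k) (Polynomial.derivative p) • (1 - DG k + DX k * DU k) • m := by
  refine comm_smul (DV k) (1 - DG k + DX k * DU k) (by rw [D_vx, add_assoc]) ?_ p m
  rw [add_mul, sub_mul, D_gx, mul_assoc, D_ux]
  noncomm_ring

lemma JF_V (hg : DG k • z = a • z) (hz : DZ k • z = (-(c/2)) • z) (hu : DU k • z = 0)
    (hv : DV k • z = 0) {m : M} {n : ℕ}
    (h : m ∈ JF (k := k) z n) : DV k • m ∈ JF (k := k) z n := by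
  refine JF_stab (DV k) (1 - DG k + DX k * DU k) (by rw [D_vx, add_assoc]) ?_ ?_ ?_ h
  · rw [add_mul, sub_mul, D_gx, mul_assoc, D_ux]
    noncomm_ring
  · intro n
    induction n with
    | zero => simp [hv]
    | succ n ih =>
      rw [pow_succ', mul_smul, ← mul_smul (DV k), D_vy, add_smul, sub_smul, mul_smul, mul_smul,
        mul_smul]
      exact add_mem (sub_mem (JF_Y ih) (JF_le_succ (JF_G hg (JF_Z hz (JF_y _ _)))))
        (JF_le_succ (JF_Y (JF_uy' hg hu _)))
  · intro n
    rw [add_smul, sub_smul, one_smul, mul_smul]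
    exact add_mem (sub_mem (JF_y _ _) (JF_gy' hg _)) (JF_x (JF_le_succ (JF_uy' hg hu _)))

lemma JF_all (hg : DG k • z = a • z) (hz : DZ k • z = (-(c/2)) • z) (hu : DU k • z = 0)
    (hv : DV k • z = 0) (ha : a ≠ 0) (f : FreeAlgebra k JGen) :
    ∀ (n : ℕ) (m : M), m ∈ JF (k := k) z n → ∃ n', Dmk k f • m ∈ JF (k := k) z n' := by
  induction f using FreeAlgebra.induction with
  | grade0 r =>
    intro n m hm
    refine ⟨n, ?_⟩
    rw [AlgHom.commutes, algebraMap_smul]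
    exact Submodule.smul_mem _ _ hm
  | grade1 s =>
    intro n m hm
    cases s
    · exact ⟨n, JF_U hg hu (JF_le_succ hm)⟩
    · exact ⟨n, JF_V hg hz hu hv hm⟩
    · exact ⟨n, JF_Z hz hm⟩
    · exact ⟨n, JF_G hg hm⟩
    · exact ⟨n, JF_Ginv hg ha hm⟩
    · exact ⟨n, JF_x hm⟩
    · exact ⟨n + 1, JF_Y hm⟩
  | mul f f' h h' =>
    intro n m hm
    obtain ⟨n', h1⟩ := h' n m hm
    obtain ⟨n'', h2⟩ := h n' _ h1
    exact ⟨n'', by rwa [map_mul, mul_smul]⟩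
  | add f f' h h' =>
    intro n m hm
    obtain ⟨n', h1⟩ := h' n m hm
    obtain ⟨n'', h2⟩ := h n m hm
    refine ⟨max n' n'', ?_⟩
    rw [map_add, add_smul]
    exact add_mem (JF_mono (le_max_right _ _) h2) (JF_mono (le_max_left _ _) h1)

lemma sing_zero (hg : DG k • z = a • z) (hu : DU k • z = 0) (hv : DV k • z = 0) (ha1 : a ≠ 1)
    (N : Submodule (D k) M) (d : ℕ) : ∀ p : Polynomial k, p ≠ 0 → p.natDegree = d →
      Polynomial.aeval (DX k) p • z ∈ N → z ∈ N := by
  have : SMulCommClass k (D k) M := IsScalarTower.to_smulCommClass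
  have hk : ∀ (b : k) (m : M), b ≠ 0 → b • m ∈ N → m ∈ N := by
    intro b m hb h
    have := N.smul_mem (algebraMap k (D k) b⁻¹) h
    rwa [algebraMap_smul, smul_smul, inv_mul_cancel₀ hb, one_smul] at this
  induction d with
  | zero =>
    intro p hp hd h
    rw [Polynomial.eq_C_of_natDegree_eq_zero hd, Polynomial.aeval_C, algebraMap_smul] at h
    refine hk _ _ ?_ h
    intro h0
    apply hp
    rw [Polynomial.eq_C_of_natDegree_eq_zero hd, h0, Polynomial.C_0]
  | succ d ih =>
    intro p hp hd h
    have h1 := N.smul_mem (DV k) h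
    have e : (1 - DG k + DX k * DU k) • z = (1 - a) • z := by
      rw [add_smul, sub_smul, mul_smul, hu, hg, smul_zero, add_zero, sub_smul, one_smul, one_smul]
    rw [V_p, hv, smul_zero, zero_add, e, smul_comm] at h1
    have hd' : (Polynomial.derivative p).natDegree = d := by
      rw [Polynomial.natDegree_derivative]; omega
    refine ih _ ?_ hd' (hk _ _ (sub_ne_zero.2 ha1.symm) h1)
    intro h0
    have := Polynomial.derivative_eq_zero.1 h0
    omega

lemma sing (hg : DG k • z = a • z) (hu : DU k • z = 0) (hv : DV k • z = 0) (ha1 : a ≠ 1)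
    (N : Submodule (D k) M) (n : ℕ) : ∀ (p : Polynomial k) (r : M), p ≠ 0 → r ∈ JF (k := k) z n →
      r + Polynomial.aeval (DX k) p • DY k ^ n • z ∈ N → z ∈ N := by
  have : SMulCommClass k (D k) M := IsScalarTower.to_smulCommClass
  induction n with
  | zero =>
    intro p r hp hr h
    simp only [JF, Submodule.mem_bot] at hr
    rw [hr, zero_add, pow_zero, one_smul] at h
    exact sing_zero hg hu hv ha1 N _ p hp rfl h
  | succ n ih =>
    intro p r hp hr h
    have h1 := N.smul_mem (DU k) h
    have hb : ((n : k) + 1) * (1 - a) ≠ 0 :=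
      mul_ne_zero (by exact_mod_cast Nat.succ_ne_zero n) (sub_ne_zero.2 ha1.symm)
    refine ih ((((n : k) + 1) * (1 - a)) • p) (DU k • r + Polynomial.aeval (DX k) p •
      (DU k • DY k ^ (n + 1) • z - (((n : k) + 1) * (1 - a)) • DY k ^ n • z))
      (smul_ne_zero hb hp) (add_mem (JF_U hg hu hr) (JF_p _ (JF_uy hg hu n))) ?_
    convert h1 using 1
    rw [smul_add, U_p, smul_sub, map_smul, smul_assoc,
      smul_comm (Polynomial.aeval (DX k) p) (((n : k) + 1) * (1 - a))]
    abel

lemma sing_all (hg : DG k • z = a • z) (hu : DU k • z = 0) (hv : DV k • z = 0) (ha1 : a ≠ 1)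
    (N : Submodule (D k) M) (n : ℕ) : ∀ m : M, m ≠ 0 → m ∈ JF (k := k) z n → m ∈ N → z ∈ N := by
  induction n with
  | zero => intro m hm h; simp only [JF, Submodule.mem_bot] at h; exact absurd h hm
  | succ n ih =>
    intro m hm h hN
    obtain ⟨r, hr, p, rfl⟩ := (JF_succ _ _ _).1 h
    by_cases hp : p = 0
    · subst hp
      simp only [map_zero, zero_smul, add_zero] at hm hN
      exact ih r hm hr hN
    · exact sing hg hu hv ha1 N n p r hp hr hN

end JAbs

section JModel

/-- Operators of the functional model. -/
noncomputable def JOp (a c : k) : JGen → Module.End k (ℤ → k → k)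
  | .u => { toFun := fun f n w => 2 * (-a * f (n+1) (w+1) + (1+a) * f (n+1) (w+1/2) - f (n+1) w)
            map_add' := by intros; ext; simp; ring
            map_smul' := by intros; ext; simp; ring }
  | .v => { toFun := fun f n w =>
              ((n : k) + 1) * (-3*a* f (n+1) (w+1) + 2*(1+a) * f (n+1) (w+1/2) - f (n+1) w)
              + w * (2*a*f (n+1) (w+1) - 2*(1+a) * f (n+1) (w+1/2) + 2 * f (n+1) w)
              + (4*a+a*c) * f (n+1) (w+1) + 2 * f (n+1) w - (4*a+a*c+2) * f (n+1) (w+1/2)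
            map_add' := by intros; ext; simp; ring
            map_smul' := by intros; ext; simp; ring }
  | .zeta => { toFun := fun f n w => ((n : k) - c/2) * f n w
               map_add' := by intros; ext; simp; ring
               map_smul' := by intros; ext; simp; ring }
  | .g => { toFun := fun f n w => a * f n (w+1)
            map_add' := by intros; ext; simp; ring
            map_smul' := by intros; ext; simp; ring }
  | .ginv => { toFun := fun f n w => a⁻¹ * f n (w-1)
               map_add' := by intros; ext; simp; ring
               map_smul' := by intros; ext; simp; ring }
  | .x => { toFun := fun f n w => f (n-1) w
            map_add' := by intros; ext; simp
            map_smul' := by intros; ext; simp }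
  | .y => { toFun := fun f n w => (w - ((n : k) - 1)/2) * f (n-1) w
            map_add' := by intros; ext; simp; ring
            map_smul' := by intros; ext; simp; ring }

lemma JOp_rel (a c : k) (ha : a ≠ 0) {p q : FreeAlgebra k JGen} (h : JRel k p q) :
    FreeAlgebra.lift k (JOp k a c) p = FreeAlgebra.lift k (JOp k a c) q := by
  have e1 : ∀ w : k, w + 1/2 + 1 = w + 3/2 := by intro w; ring
  have e2 : ∀ w : k, w + 1 + 1/2 = w + 3/2 := by intro w; ring
  have e3 : ∀ w : k, w + 1/2 + 1/2 = w + 1 := by intro w; ring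
  cases h <;> refine LinearMap.ext fun f => funext fun n => funext fun w => ?_ <;>
    simp only [map_mul, map_add, map_sub, map_one, map_smul, FreeAlgebra.lift_ι_apply,
      Module.End.mul_apply, LinearMap.add_apply, LinearMap.sub_apply, LinearMap.smul_apply,
      Module.End.one_apply, Pi.add_apply, Pi.sub_apply, Pi.smul_apply, smul_eq_mul,
      JOp, LinearMap.coe_mk, AddHom.coe_mk, e1, e2, e3, sub_add_cancel, add_sub_cancel_right] <;>
    push_cast <;> (try field_simp) <;> (try ring)

/-- The representation of `D` on the functional model. -/
noncomputable def JRep (a c : k) (ha : a ≠ 0) : D k →ₐ[k] Module.End k (ℤ → k → k) :=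
  RingQuot.liftAlgHom k ⟨FreeAlgebra.lift k (JOp k a c), fun _ _ h => JOp_rel k a c ha h⟩

lemma JRep_mk (a c : k) (ha : a ≠ 0) (s : JGen) : JRep k a c ha (Dmk k (ι k s)) = JOp k a c s := by
  have : JRep k a c ha (Dmk k (ι k s)) = FreeAlgebra.lift k (JOp k a c) (ι k s) :=
    RingQuot.liftAlgHom_mkAlgHom_apply k _ _ _
  rw [this, FreeAlgebra.lift_ι_apply]

lemma one_notMem (a c : k) (ha : a ≠ 0) : (1 : D k) ∉ MIdeal k a c := by
  intro h
  let z : ℤ → k → k := fun n _ => if n = 0 then 1 else 0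
  have key : ∀ d ∈ MIdeal k a c, JRep k a c ha d z = 0 := by
    intro d hd
    induction hd using Submodule.span_induction with
    | mem d hd =>
      rcases hd with rfl | rfl | rfl | rfl
      · rw [map_sub, DG, JRep_mk, AlgHom.commutes]
        ext n w
        simp [JOp, z, Module.algebraMap_end_apply]
      · rw [map_add, DZ, JRep_mk, AlgHom.commutes]
        ext n w
        by_cases hn : n = 0 <;> simp [JOp, z, Module.algebraMap_end_apply, hn]
      · rw [DU, JRep_mk]
        ext n w
        by_cases hn : n + 1 = 0 <;> simp [JOp, z, hn]
      · rw [DV, JRep_mk]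
        ext n w
        by_cases hn : n + 1 = 0
        · have : n = -1 := by omega
          subst this
          simp [JOp, z]
          right; ring
        · simp [JOp, z, hn]
    | zero => simp
    | add _ _ _ _ h1 h2 => simp [h1, h2]
    | smul r d _ h1 => rw [smul_eq_mul, map_mul, Module.End.mul_apply, h1, map_zero]
  have h0 := congrFun (congrFun (key 1 h) 0) 0
  simp [z] at h0

end JModel

/-- if `a ∈ k^×` and `a ≠ 1`, then the Verma module `M_{a,c}` is a simple
`D`-module for every `c ∈ k`. -/
theorem Verma_simple_of_ne_one (a c : k) (ha : a ≠ 0) (ha1 : a ≠ 1) :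
    IsSimpleModule (D k) (Mver k a c) := by
  have hsub : ∀ d ∈ ({DG k - algebraMap k (D k) a, DZ k + algebraMap k (D k) (c / 2), DU k, DV k} :
      Set (D k)), d • mmk k a c 1 = 0 := by
    intro d hd
    have e : d • mmk k a c 1 = Submodule.Quotient.mk (p := MIdeal k a c) d := by
      rw [mmk, ← Submodule.Quotient.mk_smul, smul_eq_mul, mul_one]
    rw [e, Submodule.Quotient.mk_eq_zero]
    exact Submodule.subset_span hd
  have hg : DG k • mmk k a c 1 = a • mmk k a c 1 := by
    have := hsub (DG k - algebraMap k (D k) a) (by simp)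
    rwa [sub_smul, algebraMap_smul, sub_eq_zero] at this
  have hz : DZ k • mmk k a c 1 = (-(c/2)) • mmk k a c 1 := by
    have := hsub (DZ k + algebraMap k (D k) (c / 2)) (by simp)
    rwa [add_smul, algebraMap_smul, add_eq_zero_iff_eq_neg, ← neg_smul] at this
  have hu : DU k • mmk k a c 1 = 0 := hsub _ (by simp)
  have hv : DV k • mmk k a c 1 = 0 := hsub _ (by simp)
  have hne : mmk k a c 1 ≠ 0 := by
    intro h
    rw [mmk, Submodule.Quotient.mk_eq_zero] at h
    exact one_notMem k a c ha h
  have : Nontrivial (Mver k a c) := ⟨⟨_, _, hne⟩⟩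
  refine isSimpleModule_iff _ _ |>.2 { eq_bot_or_eq_top := fun N => ?_ }
  by_cases hN : N = ⊥
  · exact Or.inl hN
  right
  obtain ⟨m, hm, hm0⟩ := (Submodule.ne_bot_iff N).1 hN
  have gen : ∀ m : Mver k a c, ∃ d : D k, m = d • mmk k a c 1 := by
    intro m
    obtain ⟨d, rfl⟩ := Submodule.Quotient.mk_surjective _ m
    exact ⟨d, by rw [mmk, ← Submodule.Quotient.mk_smul, smul_eq_mul, mul_one]⟩
  have hzN : mmk k a c 1 ∈ N := by
    obtain ⟨d, rfl⟩ := gen m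
    obtain ⟨f, rfl⟩ : ∃ f, Dmk k f = d := RingQuot.mkAlgHom_surjective k (JRel k) d
    obtain ⟨n, hn⟩ := JF_all hg hz hu hv ha f 1 (mmk k a c 1)
      (by simpa using JF_y (k := k) (mmk k a c 1) 0)
    exact sing_all hg hu hv ha1 N n _ hm0 hn hm
  rw [eq_top_iff]
  rintro m -
  obtain ⟨d, rfl⟩ := gen m
  exact N.smul_mem d hzN
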